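/- arXiv:2503.01663 — 2 statements merged into one kernel-verified Lean document; each statement's English description precedes it below -/
import Mathlib

section
/- Let H = {1,…,m} and L = {1,…,n} be finite sets, let p = (p₁,…,p_m) ∈ [0,1]^m, and let F = (f₁,…,f_n) be an aligned tuple of nonnegative real-valued functions on the power set of H. Let Π = (π₁,…,π_m) and Π′ = (π′₁,…,π′_m) be tuples of partitions of L such that π′_h = π_h for all h ≠ 1 and π′₁ is obtained from π₁ by replacing two of its blocks M₁, M₂ by their union M₁ ∪ M₂ (all other blocks unchanged). Then E(Π′,p,F) ≥ E(Π,p,F). -/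
open Finset

/-- Weight of a block `M` of a partition relative to a turnout set `S`. -/
def blockWeight {n : ℕ} (p : ℝ) (M S : Finset (Fin n)) : ℝ :=
  if M ⊆ S then p else if M ∩ S = ∅ then 1 - p else 0

/-- The measure `μ_{π,p}` on subsets of `L = Fin n`. -/
def partMeasure {n : ℕ} (pt : Finpartition (univ : Finset (Fin n))) (p : ℝ)
    (S : Finset (Fin n)) : ℝ :=
  ∏ M ∈ pt.parts, blockWeight p M S

/-- `L_h(T) = {l : (h,l) ∈ T}`. -/
def Lh {m n : ℕ} (h : Fin m) (T : Finset (Fin m × Fin n)) : Finset (Fin n) :=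
  univ.filter fun l => (h, l) ∈ T

/-- `H_l(T) = {h : (h,l) ∈ T}`. -/
def Hl {m n : ℕ} (l : Fin n) (T : Finset (Fin m × Fin n)) : Finset (Fin m) :=
  univ.filter fun h => (h, l) ∈ T

/-- The measure `μ_{Π,p}` on subsets of `H × L`. -/
def schedMeasure {m n : ℕ} (Sch : Fin m → Finpartition (univ : Finset (Fin n)))
    (p : Fin m → ℝ) (T : Finset (Fin m × Fin n)) : ℝ :=
  ∏ h, partMeasure (Sch h) (p h) (Lh h T)

/-- `E(Π, p, F)`. -/
def schedExp {m n : ℕ} (Sch : Fin m → Finpartition (univ : Finset (Fin n)))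
    (p : Fin m → ℝ) (F : Fin n → Finset (Fin m) → ℝ) : ℝ :=
  ∑ T : Finset (Fin m × Fin n), (∏ l, F l (Hl l T)) * schedMeasure Sch p T

def IncreasingAt {m : ℕ} (f : Finset (Fin m) → ℝ) (h : Fin m) : Prop :=
  ∀ S : Finset (Fin m), f S ≤ f (insert h S)

def DecreasingAt {m : ℕ} (f : Finset (Fin m) → ℝ) (h : Fin m) : Prop :=
  ∀ S : Finset (Fin m), f (insert h S) ≤ f S

def Aligned {m n : ℕ} (F : Fin n → Finset (Fin m) → ℝ) : Prop :=
  ∀ h : Fin m, (∀ l, IncreasingAt (F l) h) ∨ (∀ l, DecreasingAt (F l) h)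

/-- `Sch'` is coarser than `Sch`. -/
def Coarser {m n : ℕ} (Sch' Sch : Fin m → Finpartition (univ : Finset (Fin n))) : Prop :=
  ∀ h, ∀ M ∈ (Sch h).parts, ∃ M' ∈ (Sch' h).parts, M ⊆ M'

/-- Product Bernoulli measure on subsets of `H = Fin m`. -/
def bern {m : ℕ} (p : Fin m → ℝ) (S : Finset (Fin m)) : ℝ :=
  (∏ h ∈ S, p h) * ∏ h ∈ Sᶜ, (1 - p h)

/-- Expectation with respect to the product Bernoulli measure. -/
def bernExp {m : ℕ} (p : Fin m → ℝ) (f : Finset (Fin m) → ℝ) : ℝ :=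
  ∑ S : Finset (Fin m), f S * bern p S

/-!
Let `z` be the voter whose blocks are merged and fix the turnout `A` of all the others. The
remaining sum runs over the turnout set `S` of `z`, and `S ↦ ∏ l, f_l` is supermodular: it is
log-modular because each factor depends on `S` only through `l ∈ S`, and it is monotone or antitone
by alignment. Fixing also the trace `R` of `S` outside `M₁ ∪ M₂`, write `φ B` for the product at
`S = R ∪ B`. Merging `M₁` and `M₂` then changes the expectation by a nonnegative multiple of
`p (1 - p) (φ (M₁ ∪ M₂) + φ ∅ - φ M₁ - φ M₂) ≥ 0`.
-/

lemma sum_powerset_union {α M : Type*} [DecidableEq α] [AddCommMonoid M] {s t : Finset α}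
    (hst : Disjoint s t) (f : Finset α → M) :
    ∑ S ∈ (s ∪ t).powerset, f S = ∑ A ∈ s.powerset, ∑ B ∈ t.powerset, f (A ∪ B) := by
  rw [← sum_product']
  refine sum_nbij' (fun S => (S ∩ s, S ∩ t)) (fun P => P.1 ∪ P.2)
    (fun S _ => mk_mem_product (mem_powerset.2 inter_subset_right)
      (mem_powerset.2 inter_subset_right))
    (fun P hP => ?_) (fun S hS => ?_) (fun P hP => ?_) fun S hS => ?_
  · rw [mem_product, mem_powerset, mem_powerset] at hP
    exact mem_powerset.2 (union_subset_union hP.1 hP.2)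
  · rw [← inter_union_distrib_left, inter_eq_left.2 (mem_powerset.1 hS)]
  · rw [mem_product, mem_powerset, mem_powerset] at hP
    rw [union_inter_distrib_right, union_inter_distrib_right, inter_eq_left.2 hP.1,
      inter_eq_left.2 hP.2, disjoint_iff_inter_eq_empty.1 (hst.mono_left hP.1),
      disjoint_iff_inter_eq_empty.1 (hst.symm.mono_left hP.2), union_empty, empty_union]
  · rw [← inter_union_distrib_left, inter_eq_left.2 (mem_powerset.1 hS)]

lemma sum_powerset_singleton_product {α β M : Type*} [AddCommMonoid M] (a : α) (t : Finset β)
    (f : Finset (α × β) → M) :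
    ∑ B ∈ ({a} ×ˢ t).powerset, f B = ∑ S ∈ t.powerset, f ({a} ×ˢ S) := by
  simp only [singleton_product]
  symm
  refine sum_bij (fun S _ => S.map ⟨Prod.mk a, Prod.mk_right_injective a⟩) (fun S hS => ?_)
    (fun S _ S' _ h => map_injective _ h) (fun B hB => ?_) fun S _ => rfl
  · exact mem_powerset.2 (map_subset_map.2 (mem_powerset.1 hS))
  · obtain ⟨S, hS, rfl⟩ := subset_map_iff.1 (mem_powerset.1 hB)
    exact ⟨S, mem_powerset.2 hS, rfl⟩

lemma sum_mul_mul_eq_sum_powerset_compl {α R : Type*} [Fintype α] [DecidableEq α]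
    [CommSemiring R] (s : Finset α) (φ : Finset α → R) {v w : Finset α → R}
    (hv : ∀ A, ∀ B ⊆ s, v (A ∪ B) = v A) (hw : ∀ A B, Disjoint s A → w (A ∪ B) = w B) :
    ∑ S, φ S * (v S * w S) =
      ∑ A ∈ sᶜ.powerset, v A * ∑ B ∈ s.powerset, φ (A ∪ B) * w B := by
  rw [← powerset_univ, ← union_compl s, union_comm, sum_powerset_union disjoint_compl_left]
  refine sum_congr rfl fun A hA => ?_
  rw [mul_sum]
  refine sum_congr rfl fun B hB => ?_
  rw [hv A B (mem_powerset.1 hB),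
    hw A B (disjoint_compl_right.mono_right (mem_powerset.1 hA))]
  ring

/-- Supermodularity of a function on a lattice, which for functions of finite sets says that the
increments grow with the set. It is the condition under which merging two blocks of a partition
cannot decrease the expectation. -/
def Supermodular {α R : Type*} [Lattice α] [Add R] [LE R] (φ : α → R) : Prop :=
  ∀ a b, φ a + φ b ≤ φ (a ⊔ b) + φ (a ⊓ b)

lemma Supermodular.comp_compl {α R : Type*} [BooleanAlgebra α] [AddCommMagma R] [LE R]
    {φ : α → R} (hφ : Supermodular φ) : Supermodular fun a => φ aᶜ := fun a b => by
  simpa only [compl_sup, compl_inf, add_comm] using hφ aᶜ bᶜ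

lemma add_le_add_of_mul_eq_mul {R : Type*} [CommRing R] [LinearOrder R] [IsStrictOrderedRing R]
    {x y u v : R} (hu : 0 ≤ u) (hv : 0 ≤ v) (hxv : x ≤ v) (hyv : y ≤ v) (h : x * y = v * u) :
    x + y ≤ v + u := by
  rcases hv.eq_or_lt with rfl | hv
  · linarith
  · refine le_of_mul_le_mul_left ?_ hv
    linarith [mul_nonneg (sub_nonneg.2 hxv) (sub_nonneg.2 hyv)]

section Piecewise

variable {ι R : Type*} [Fintype ι] [DecidableEq ι]

lemma prod_piecewise_mul_prod_piecewise {M : Type*} [CommMonoid M] (f g : ι → M)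
    (S T : Finset ι) :
    (∏ i, S.piecewise f g i) * ∏ i, T.piecewise f g i =
      (∏ i, (S ∪ T).piecewise f g i) * ∏ i, (S ∩ T).piecewise f g i := by
  simp only [← prod_mul_distrib]
  refine prod_congr rfl fun i _ => ?_
  by_cases hS : i ∈ S <;> by_cases hT : i ∈ T <;> simp [hS, hT, mul_comm]

variable [CommRing R] [LinearOrder R] [IsStrictOrderedRing R] {f g : ι → R}

lemma prod_piecewise_le_prod_piecewise (hg : 0 ≤ g) (hgf : g ≤ f) {S T : Finset ι}
    (hST : S ⊆ T) :
    ∏ i, S.piecewise f g i ≤ ∏ i, T.piecewise f g i := by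
  refine prod_le_prod (fun i _ => ?_) fun i _ => ?_
  · exact S.le_piecewise_of_le_of_le (hg.trans hgf) hg i
  · by_cases hS : i ∈ S
    · simp [hS, hST hS]
    · simpa only [hS, not_false_eq_true, piecewise_eq_of_notMem] using
        T.le_piecewise_of_le_of_le hgf le_rfl i

lemma supermodular_prod_piecewise_of_le (hg : 0 ≤ g) (hgf : g ≤ f) :
    Supermodular fun S : Finset ι => ∏ i, S.piecewise f g i := fun S T => by
  have hnonneg : ∀ U : Finset ι, 0 ≤ ∏ i, U.piecewise f g i := fun U =>
    prod_nonneg fun i _ => U.le_piecewise_of_le_of_le (hg.trans hgf) hg i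
  exact add_le_add_of_mul_eq_mul (hnonneg _) (hnonneg _)
    (prod_piecewise_le_prod_piecewise hg hgf subset_union_left)
    (prod_piecewise_le_prod_piecewise hg hgf subset_union_right)
    (prod_piecewise_mul_prod_piecewise f g S T)

lemma supermodular_prod_piecewise (hf : 0 ≤ f) (hg : 0 ≤ g) (hfg : g ≤ f ∨ f ≤ g) :
    Supermodular fun S : Finset ι => ∏ i, S.piecewise f g i := by
  rcases hfg with hgf | hfg
  · exact supermodular_prod_piecewise_of_le hg hgf
  · simpa only [piecewise_compl] using (supermodular_prod_piecewise_of_le hf hfg).comp_compl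

end Piecewise

section Blocks

variable {n : ℕ} {p : ℝ} {M N M₁ M₂ : Finset (Fin n)}

lemma blockWeight_nonneg (hp : 0 ≤ p ∧ p ≤ 1) (M S : Finset (Fin n)) :
    0 ≤ blockWeight p M S := by
  unfold blockWeight
  split_ifs <;> linarith [hp.1, hp.2]

lemma partMeasure_nonneg (π : Finpartition (univ : Finset (Fin n))) (hp : 0 ≤ p ∧ p ≤ 1)
    (S : Finset (Fin n)) : 0 ≤ partMeasure π p S :=
  prod_nonneg fun _ _ => blockWeight_nonneg hp _ _

lemma blockWeight_congr (p : ℝ) {S T : Finset (Fin n)} (h : M ∩ S = M ∩ T) :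
    blockWeight p M S = blockWeight p M T := by
  simp only [blockWeight, ← inter_eq_left, h]

lemma blockWeight_union_of_disjoint_left (p : ℝ) {R : Finset (Fin n)} (h : Disjoint M R)
    (S : Finset (Fin n)) : blockWeight p M (R ∪ S) = blockWeight p M S :=
  blockWeight_congr p <| by
    rw [inter_union_distrib_left, disjoint_iff_inter_eq_empty.1 h, empty_union]

lemma blockWeight_union_of_disjoint_right (p : ℝ) (h : Disjoint M N)
    (S : Finset (Fin n)) : blockWeight p M (S ∪ N) = blockWeight p M S := by
  rw [union_comm, blockWeight_union_of_disjoint_left p h]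

lemma sum_powerset_mul_blockWeight (p : ℝ) (hM : M.Nonempty) (φ : Finset (Fin n) → ℝ) :
    ∑ B ∈ M.powerset, φ B * blockWeight p M B = φ ∅ * (1 - p) + φ M * p := by
  have hsub : {∅, M} ⊆ M.powerset := by simp [insert_subset_iff]
  rw [← sum_subset hsub, sum_pair hM.ne_empty.symm]
  · simp [blockWeight, subset_empty, hM.ne_empty]
  · intro B hB hB'
    simp only [mem_insert, mem_singleton, not_or] at hB'
    have hBM : B ⊆ M := mem_powerset.1 hB
    have hMB : ¬ M ⊆ B := fun h => hB'.2 (hBM.antisymm h)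
    simp [blockWeight, hMB, inter_eq_right.2 hBM, hB'.1]

lemma sum_powerset_mul_blockWeight_mul_blockWeight (p : ℝ) (hM₁ : M₁.Nonempty)
    (hM₂ : M₂.Nonempty) (hM₁₂ : Disjoint M₁ M₂) (φ : Finset (Fin n) → ℝ) :
    ∑ B ∈ (M₁ ∪ M₂).powerset, φ B * (blockWeight p M₁ B * blockWeight p M₂ B) =
      (φ ∅ * (1 - p) + φ M₂ * p) * (1 - p) + (φ M₁ * (1 - p) + φ (M₁ ∪ M₂) * p) * p := by
  calc
    _ = ∑ B₁ ∈ M₁.powerset, (∑ B₂ ∈ M₂.powerset, φ (B₁ ∪ B₂) * blockWeight p M₂ B₂) *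
          blockWeight p M₁ B₁ := by
      rw [sum_powerset_union hM₁₂]
      simp only [sum_mul]
      refine sum_congr rfl fun B₁ hB₁ => sum_congr rfl fun B₂ hB₂ => ?_
      rw [blockWeight_union_of_disjoint_right p (hM₁₂.mono_right (mem_powerset.1 hB₂)),
        blockWeight_union_of_disjoint_left p (hM₁₂.symm.mono_right (mem_powerset.1 hB₁))]
      ring
    _ = _ := by
      simp only [sum_powerset_mul_blockWeight p hM₂, sum_powerset_mul_blockWeight p hM₁,
        empty_union, union_empty]

lemma sum_powerset_mul_blockWeight_merge_le (hp : 0 ≤ p ∧ p ≤ 1) (hM₁ : M₁.Nonempty)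
    (hM₂ : M₂.Nonempty) (hM₁₂ : Disjoint M₁ M₂) {φ : Finset (Fin n) → ℝ}
    (hφ : φ M₁ + φ M₂ ≤ φ (M₁ ∪ M₂) + φ ∅) :
    ∑ B ∈ (M₁ ∪ M₂).powerset, φ B * (blockWeight p M₁ B * blockWeight p M₂ B) ≤
      ∑ B ∈ (M₁ ∪ M₂).powerset, φ B * blockWeight p (M₁ ∪ M₂) B := by
  rw [sum_powerset_mul_blockWeight_mul_blockWeight p hM₁ hM₂ hM₁₂,
    sum_powerset_mul_blockWeight p (hM₁.mono subset_union_left)]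
  have hpq : 0 ≤ p * (1 - p) := mul_nonneg hp.1 (sub_nonneg.2 hp.2)
  linarith [mul_nonneg hpq (sub_nonneg.2 hφ)]

end Blocks

section MergePartition

variable {n : ℕ} {π π' : Finpartition (univ : Finset (Fin n))} {M₁ M₂ : Finset (Fin n)}

lemma partMeasure_eq_prod_sdiff_mul (p : ℝ) (hM₁ : M₁ ∈ π.parts) (hM₂ : M₂ ∈ π.parts)
    (hne : M₁ ≠ M₂) (S : Finset (Fin n)) :
    partMeasure π p S = (∏ M ∈ π.parts \ {M₁, M₂}, blockWeight p M S) *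
      (blockWeight p M₁ S * blockWeight p M₂ S) := by
  have hsub : {M₁, M₂} ⊆ π.parts := by simp [insert_subset_iff, hM₁, hM₂]
  rw [partMeasure, ← prod_sdiff hsub, prod_pair hne]

lemma disjoint_union_of_mem_parts_sdiff (hM₁ : M₁ ∈ π.parts) (hM₂ : M₂ ∈ π.parts)
    {M : Finset (Fin n)} (hM : M ∈ π.parts \ {M₁, M₂}) : Disjoint M (M₁ ∪ M₂) := by
  simp only [mem_sdiff, mem_insert, mem_singleton, not_or] at hM
  exact disjoint_union_right.2 ⟨π.disjoint hM.1 hM₁ hM.2.1, π.disjoint hM.1 hM₂ hM.2.2⟩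

lemma partMeasure_merge_eq_prod_sdiff_mul (p : ℝ) (hM₁ : M₁ ∈ π.parts) (hM₂ : M₂ ∈ π.parts)
    (hmerge : π'.parts = insert (M₁ ∪ M₂) (π.parts \ {M₁, M₂})) (S : Finset (Fin n)) :
    partMeasure π' p S = (∏ M ∈ π.parts \ {M₁, M₂}, blockWeight p M S) *
      blockWeight p (M₁ ∪ M₂) S := by
  have hnotMem : M₁ ∪ M₂ ∉ π.parts \ {M₁, M₂} := fun h =>
    ((π.nonempty_of_mem_parts hM₁).mono subset_union_left).ne_empty
      (disjoint_self.1 (disjoint_union_of_mem_parts_sdiff hM₁ hM₂ h))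
  rw [partMeasure, hmerge, prod_insert hnotMem, mul_comm]

lemma Supermodular.sum_mul_partMeasure_le_of_merge {p : ℝ} (hp : 0 ≤ p ∧ p ≤ 1)
    (hM₁ : M₁ ∈ π.parts) (hM₂ : M₂ ∈ π.parts) (hne : M₁ ≠ M₂)
    (hmerge : π'.parts = insert (M₁ ∪ M₂) (π.parts \ {M₁, M₂}))
    {φ : Finset (Fin n) → ℝ} (hφ : Supermodular φ) :
    ∑ S, φ S * partMeasure π p S ≤ ∑ S, φ S * partMeasure π' p S := by
  have hM₁₂ : Disjoint M₁ M₂ := π.disjoint hM₁ hM₂ hne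
  have hrest : ∀ R, ∀ B ⊆ M₁ ∪ M₂, ∏ M ∈ π.parts \ {M₁, M₂}, blockWeight p M (R ∪ B) =
      ∏ M ∈ π.parts \ {M₁, M₂}, blockWeight p M R := fun R B hB =>
    prod_congr rfl fun M hM => blockWeight_union_of_disjoint_right p
      ((disjoint_union_of_mem_parts_sdiff hM₁ hM₂ hM).mono_right hB) R
  have hpair : ∀ R B, Disjoint (M₁ ∪ M₂) R →
      blockWeight p M₁ (R ∪ B) * blockWeight p M₂ (R ∪ B) =
        blockWeight p M₁ B * blockWeight p M₂ B := fun R B hR => by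
    rw [blockWeight_union_of_disjoint_left p (hR.mono_left subset_union_left),
      blockWeight_union_of_disjoint_left p (hR.mono_left subset_union_right)]
  simp only [partMeasure_eq_prod_sdiff_mul p hM₁ hM₂ hne,
    partMeasure_merge_eq_prod_sdiff_mul p hM₁ hM₂ hmerge]
  rw [sum_mul_mul_eq_sum_powerset_compl (M₁ ∪ M₂) φ hrest hpair,
    sum_mul_mul_eq_sum_powerset_compl (M₁ ∪ M₂) φ hrest
      fun R B hR => blockWeight_union_of_disjoint_left p hR B]
  refine sum_le_sum fun R _ => mul_le_mul_of_nonneg_left ?_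
    (prod_nonneg fun _ _ => blockWeight_nonneg hp _ _)
  refine sum_powerset_mul_blockWeight_merge_le hp (π.nonempty_of_mem_parts hM₁)
    (π.nonempty_of_mem_parts hM₂) hM₁₂ ?_
  simpa only [sup_eq_union, inf_eq_inter, ← union_union_distrib_left,
    ← union_inter_distrib_left, disjoint_iff_inter_eq_empty.1 hM₁₂] using hφ (R ∪ M₁) (R ∪ M₂)

end MergePartition

section Rows

variable {m n : ℕ}

lemma Lh_union (h : Fin m) (A B : Finset (Fin m × Fin n)) : Lh h (A ∪ B) = Lh h A ∪ Lh h B := by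
  ext l
  simp [Lh]

lemma Lh_row_self (z : Fin m) (S : Finset (Fin n)) : Lh z ({z} ×ˢ S) = S := by
  ext l
  simp [Lh]

lemma Lh_eq_empty_iff_disjoint {h : Fin m} {A : Finset (Fin m × Fin n)} :
    Lh h A = ∅ ↔ Disjoint ({h} ×ˢ univ) A := by
  simp [Lh, filter_eq_empty_iff, Finset.disjoint_left]

lemma Hl_union_row (z : Fin m) (l : Fin n) (A : Finset (Fin m × Fin n)) (S : Finset (Fin n)) :
    Hl l (A ∪ {z} ×ˢ S) = if l ∈ S then insert z (Hl l A) else Hl l A := by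
  split_ifs with hl <;> ext h <;> simp [Hl, hl, or_comm, eq_comm]

lemma supermodular_prod_Hl_union_row {F : Fin n → Finset (Fin m) → ℝ} (hF : ∀ l S, 0 ≤ F l S)
    {z : Fin m} (hz : (∀ l, IncreasingAt (F l) z) ∨ ∀ l, DecreasingAt (F l) z)
    (A : Finset (Fin m × Fin n)) :
    Supermodular fun S => ∏ l, F l (Hl l (A ∪ {z} ×ˢ S)) := by
  have hpiecewise : ∀ (S : Finset (Fin n)) l, F l (Hl l (A ∪ {z} ×ˢ S)) =
      S.piecewise (fun l => F l (insert z (Hl l A))) (fun l => F l (Hl l A)) l := fun S l => by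
    rw [Hl_union_row, piecewise, apply_ite (F l)]
  simp only [hpiecewise]
  exact supermodular_prod_piecewise (fun l => hF l _) (fun l => hF l _)
    (hz.imp (fun h l => h l _) fun h l => h l _)

lemma schedExp_eq_sum_compl_row (Sch : Fin m → Finpartition (univ : Finset (Fin n)))
    (p : Fin m → ℝ) (F : Fin n → Finset (Fin m) → ℝ) (z : Fin m) :
    schedExp Sch p F = ∑ A ∈ ({z} ×ˢ univ)ᶜ.powerset,
      (∏ h ∈ {z}ᶜ, partMeasure (Sch h) (p h) (Lh h A)) *
        ∑ S, (∏ l, F l (Hl l (A ∪ {z} ×ˢ S))) * partMeasure (Sch z) (p z) S := by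
  have hother : ∀ A, ∀ B ⊆ {z} ×ˢ univ, ∏ h ∈ {z}ᶜ, partMeasure (Sch h) (p h) (Lh h (A ∪ B)) =
      ∏ h ∈ {z}ᶜ, partMeasure (Sch h) (p h) (Lh h A) := fun A B hB =>
    prod_congr rfl fun h hh => by
      have hB' : Lh h B = ∅ := Lh_eq_empty_iff_disjoint.2 <|
        (disjoint_product.2 (Or.inl (disjoint_singleton.2 (by simpa using hh)))).mono_right hB
      rw [Lh_union, hB', union_empty]
  have hself : ∀ A B, Disjoint ({z} ×ˢ univ) A →
      partMeasure (Sch z) (p z) (Lh z (A ∪ B)) = partMeasure (Sch z) (p z) (Lh z B) :=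
    fun A B hA => by rw [Lh_union, Lh_eq_empty_iff_disjoint.2 hA, empty_union]
  have hsplit : ∀ T, schedMeasure Sch p T = (∏ h ∈ {z}ᶜ, partMeasure (Sch h) (p h) (Lh h T)) *
      partMeasure (Sch z) (p z) (Lh z T) := fun T => by
    rw [schedMeasure, ← prod_compl_mul_prod {z}, prod_singleton]
  simp only [schedExp, hsplit]
  rw [sum_mul_mul_eq_sum_powerset_compl ({z} ×ˢ univ) _ hother hself]
  simp only [sum_powerset_singleton_product, powerset_univ, Lh_row_self]

end Rows

theorem merge_two_blocks_le_general {m n : ℕ} {z : Fin m}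
    {Sch Sch' : Fin m → Finpartition (univ : Finset (Fin n))}
    {p : Fin m → ℝ} (hp : ∀ h, 0 ≤ p h ∧ p h ≤ 1)
    {F : Fin n → Finset (Fin m) → ℝ} (hFnonneg : ∀ l S, 0 ≤ F l S)
    (hFaligned : (∀ l, IncreasingAt (F l) z) ∨ ∀ l, DecreasingAt (F l) z)
    {M₁ M₂ : Finset (Fin n)} (hM₁ : M₁ ∈ (Sch z).parts) (hM₂ : M₂ ∈ (Sch z).parts)
    (hM₁₂ : M₁ ≠ M₂) (hother : ∀ h, h ≠ z → Sch' h = Sch h)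
    (hmerge : (Sch' z).parts = insert (M₁ ∪ M₂) ((Sch z).parts \ {M₁, M₂})) :
    schedExp Sch p F ≤ schedExp Sch' p F := by
  have hrows : ∀ A : Finset (Fin m × Fin n),
      ∏ h ∈ {z}ᶜ, partMeasure (Sch' h) (p h) (Lh h A) =
        ∏ h ∈ {z}ᶜ, partMeasure (Sch h) (p h) (Lh h A) := fun A =>
    prod_congr rfl fun h hh => by rw [hother h (by simpa using hh)]
  rw [schedExp_eq_sum_compl_row Sch p F z, schedExp_eq_sum_compl_row Sch' p F z]
  simp only [hrows]
  refine sum_le_sum fun A _ => mul_le_mul_of_nonneg_left ?_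
    (prod_nonneg fun h _ => partMeasure_nonneg (Sch h) (hp h) _)
  exact (supermodular_prod_Hl_union_row hFnonneg hFaligned A).sum_mul_partMeasure_le_of_merge
    (hp z) hM₁ hM₂ hM₁₂ hmerge

/-- Merging two blocks of the partition of a single voter `h = 1` (the first voter)
increases the expectation of an aligned tuple of nonnegative functions. -/
theorem merge_two_blocks_le {m n : ℕ} (hm : 0 < m)
    (Sch Sch' : Fin m → Finpartition (univ : Finset (Fin n)))
    (p : Fin m → ℝ) (hp : ∀ h, 0 ≤ p h ∧ p h ≤ 1)
    (F : Fin n → Finset (Fin m) → ℝ)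
    (hFnonneg : ∀ l S, 0 ≤ F l S) (hFaligned : Aligned F)
    (M₁ M₂ : Finset (Fin n))
    (hM₁ : M₁ ∈ (Sch ⟨0, hm⟩).parts) (hM₂ : M₂ ∈ (Sch ⟨0, hm⟩).parts)
    (hM₁₂ : M₁ ≠ M₂)
    (hother : ∀ h : Fin m, h ≠ ⟨0, hm⟩ → Sch' h = Sch h)
    (hmerge : (Sch' ⟨0, hm⟩).parts = insert (M₁ ∪ M₂) ((Sch ⟨0, hm⟩).parts \ {M₁, M₂})) :
    schedExp Sch p F ≤ schedExp Sch' p F :=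
  merge_two_blocks_le_general hp hFnonneg (hFaligned ⟨0, hm⟩) hM₁ hM₂ hM₁₂ hother hmerge
end

section
/- Let H = {1,…,m} and L = {1,…,n} be finite sets, let p = (p₁,…,p_m) ∈ [0,1]^m, and let F = (f₁,…,f_n) be an aligned tuple of nonnegative real-valued functions on the power set of H. Let ρ and ρ′ be partitions of L with ρ coarser than ρ′ (every block of ρ′ is contained in a block of ρ). Then ∏_{M ∈ ρ} E(∏_{l ∈ M} f_l, μ_p) ≥ ∏_{M′ ∈ ρ′} E(∏_{l ∈ M′} f_l, μ_p), where μ_p is the product Bernoulli measure on subsets of H. -/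
open Finset

/-!
Flipping the coordinates at which the tuple is decreasing makes every function increasing, and
turns the product Bernoulli measure into another product Bernoulli measure (`p h` becomes
`1 - p h` on the flipped coordinates). Product Bernoulli measures satisfy the FKG lattice
condition, so iterating the FKG inequality inside each block of the coarser partition bounds the
product of the expectations over the finer blocks it contains.
-/

section Finpartition

theorem prod_parts_prod_filter_of_finpartition_le {α M : Type*} [Lattice α] [OrderBot α]
    [DecidableLE α] [CommMonoid M] {a : α} {P Q : Finpartition a} (hPQ : P ≤ Q) (f : α → M) :
    ∏ b ∈ Q.parts, ∏ c ∈ P.parts with c ≤ b, f c = ∏ c ∈ P.parts, f c := by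
  classical
  have hdisj : (Q.parts : Set α).PairwiseDisjoint fun b => {c ∈ P.parts | c ≤ b} := by
    intro b hb b' hb' hne
    refine disjoint_left.2 fun c hc hc' => ?_
    rw [mem_filter] at hc hc'
    exact P.ne_bot hc.1 (le_bot_iff.1 (Q.disjoint hb hb' hne hc.2 hc'.2))
  have hunion : Q.parts.biUnion (fun b => {c ∈ P.parts | c ≤ b}) = P.parts := by
    ext c
    simp only [mem_biUnion, mem_filter]
    exact ⟨fun ⟨_, _, hc, _⟩ => hc, fun hc => (hPQ hc).imp fun b hb => ⟨hb.1, hc, hb.2⟩⟩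
  rw [← prod_biUnion hdisj, hunion]

variable {ι : Type*} [DecidableEq ι] {s t : Finset ι} {P Q : Finpartition s}

theorem biUnion_filter_subset_of_finpartition_le (hPQ : P ≤ Q) (ht : t ∈ Q.parts) :
    {u ∈ P.parts | u ⊆ t}.biUnion id = t := by
  refine Subset.antisymm (biUnion_subset.2 fun u hu => (mem_filter.1 hu).2) fun i hi => ?_
  obtain ⟨u, hu, hiu⟩ := P.exists_mem (Q.subset ht hi)
  obtain ⟨t', ht', hut'⟩ := hPQ hu
  obtain rfl : t' = t := Q.eq_of_mem_parts ht' ht (hut' hiu) hi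
  exact mem_biUnion.2 ⟨u, mem_filter.2 ⟨hu, hut'⟩, hiu⟩

theorem prod_filter_subset_of_finpartition_le {M : Type*} [CommMonoid M] (hPQ : P ≤ Q)
    (ht : t ∈ Q.parts) (f : ι → M) :
    ∏ u ∈ P.parts with u ⊆ t, ∏ i ∈ u, f i = ∏ i ∈ t, f i := by
  conv_rhs => rw [← biUnion_filter_subset_of_finpartition_le hPQ ht]
  exact (prod_biUnion (P.disjoint.subset (coe_subset.2 (filter_subset _ _)))).symm

end Finpartition

theorem monotone_prod_of_nonneg {α β ι : Type*} [Preorder α] [CommSemiring β] [PartialOrder β]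
    [IsOrderedRing β] {s : Finset ι} {f : ι → α → β} (hf₀ : ∀ i ∈ s, 0 ≤ f i)
    (hf : ∀ i ∈ s, Monotone (f i)) : Monotone fun a => ∏ i ∈ s, f i a :=
  fun a _ hab => prod_le_prod (fun i hi => hf₀ i hi a) fun i hi => hf i hi hab

section FKG

variable {α β ι : Type*} [DistribLattice α] [Fintype α] [CommSemiring β] [LinearOrder β]
  [IsStrictOrderedRing β] [ExistsAddOfLE β] {μ : α → β} {s : Finset ι} {f : ι → α → β}

theorem fkg_prod (hμ₀ : 0 ≤ μ) (hμ₁ : ∑ a, μ a = 1)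
    (hμ : ∀ a b, μ a * μ b ≤ μ (a ⊓ b) * μ (a ⊔ b))
    (hf₀ : ∀ i ∈ s, 0 ≤ f i) (hf : ∀ i ∈ s, Monotone (f i)) :
    ∏ i ∈ s, ∑ a, μ a * f i a ≤ ∑ a, μ a * ∏ i ∈ s, f i a := by
  induction s using Finset.cons_induction with
  | empty => simp [hμ₁]
  | cons i s hi ih =>
    simp only [forall_mem_cons] at hf₀ hf
    simp only [prod_cons]
    calc (∑ a, μ a * f i a) * ∏ j ∈ s, ∑ a, μ a * f j a
        ≤ (∑ a, μ a * f i a) * ∑ a, μ a * ∏ j ∈ s, f j a :=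
          mul_le_mul_of_nonneg_left (ih hf₀.2 hf.2)
            (sum_nonneg fun a _ => mul_nonneg (hμ₀ a) (hf₀.1 a))
      _ ≤ (∑ a, μ a) * ∑ a, μ a * (f i a * ∏ j ∈ s, f j a) :=
          fkg (f i) (fun a => ∏ j ∈ s, f j a) μ hμ₀ hf₀.1
            (fun a => prod_nonneg fun j hj => hf₀.2 j hj a) hf.1
            (monotone_prod_of_nonneg hf₀.2 hf.2) hμ
      _ = ∑ a, μ a * (f i a * ∏ j ∈ s, f j a) := by rw [hμ₁, one_mul]

theorem fkg_finpartition [DecidableEq ι] (hμ₀ : 0 ≤ μ) (hμ₁ : ∑ a, μ a = 1)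
    (hμ : ∀ a b, μ a * μ b ≤ μ (a ⊓ b) * μ (a ⊔ b))
    (hf₀ : ∀ i ∈ s, 0 ≤ f i) (hf : ∀ i ∈ s, Monotone (f i))
    {P Q : Finpartition s} (hPQ : P ≤ Q) :
    ∏ u ∈ P.parts, ∑ a, μ a * ∏ i ∈ u, f i a ≤ ∏ t ∈ Q.parts, ∑ a, μ a * ∏ i ∈ t, f i a := by
  have hblock₀ : ∀ u ∈ P.parts, 0 ≤ fun a => ∏ i ∈ u, f i a :=
    fun u hu a => prod_nonneg fun i hi => hf₀ i (P.subset hu hi) a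
  have hblock : ∀ u ∈ P.parts, Monotone fun a => ∏ i ∈ u, f i a := fun u hu =>
    monotone_prod_of_nonneg (fun i hi => hf₀ i (P.subset hu hi)) fun i hi => hf i (P.subset hu hi)
  rw [← prod_parts_prod_filter_of_finpartition_le hPQ]
  refine prod_le_prod (fun t _ => prod_nonneg fun u hu => sum_nonneg fun a _ =>
    mul_nonneg (hμ₀ a) (hblock₀ u (mem_of_mem_filter u hu) a)) fun t ht => ?_
  calc ∏ u ∈ P.parts with u ≤ t, ∑ a, μ a * ∏ i ∈ u, f i a
      ≤ ∑ a, μ a * ∏ u ∈ P.parts with u ≤ t, ∏ i ∈ u, f i a :=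
        fkg_prod hμ₀ hμ₁ hμ (fun u hu => hblock₀ u (mem_of_mem_filter u hu))
          fun u hu => hblock u (mem_of_mem_filter u hu)
    _ = ∑ a, μ a * ∏ i ∈ t, f i a :=
        sum_congr rfl fun a _ =>
          congrArg (μ a * ·) (prod_filter_subset_of_finpartition_le hPQ ht fun i => f i a)

end FKG

open scoped symmDiff

section Bernoulli

variable {m : ℕ} (p : Fin m → ℝ)

variable {p} in
theorem bern_nonneg (hp : ∀ h, 0 ≤ p h ∧ p h ≤ 1) : 0 ≤ bern p :=
  fun _ => mul_nonneg (prod_nonneg fun h _ => (hp h).1)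
    (prod_nonneg fun h _ => sub_nonneg.2 (hp h).2)

theorem sum_bern : ∑ S, bern p S = 1 := by
  simpa [bern, compl_eq_univ_sdiff] using (prod_add p (fun h => 1 - p h) univ).symm

theorem bern_mul_bern (S T : Finset (Fin m)) :
    bern p S * bern p T = bern p (S ∩ T) * bern p (S ∪ T) := by
  have hmem := prod_union_inter (s₁ := S) (s₂ := T) (f := p)
  have hcompl := prod_union_inter (s₁ := Sᶜ) (s₂ := Tᶜ) (f := fun h => 1 - p h)
  simp only [bern, compl_inter, compl_union]
  rw [mul_mul_mul_comm, ← hmem, ← hcompl]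
  ring

theorem bern_eq_prod_piecewise (S : Finset (Fin m)) :
    bern p S = ∏ h, S.piecewise p (1 - p) h := by
  simp [bern, prod_piecewise, compl_eq_univ_sdiff]

/-- The success probabilities of the random set `S ∆ D`, where `S` has success probabilities `p`:
the coordinates in `D` are flipped. It is used to make aligned functions increasing. -/
def flipProb (D : Finset (Fin m)) : Fin m → ℝ :=
  D.piecewise (1 - p) p

variable {p} in
theorem flipProb_nonneg_and_le_one (hp : ∀ h, 0 ≤ p h ∧ p h ≤ 1)
    (D : Finset (Fin m)) (h : Fin m) : 0 ≤ flipProb p D h ∧ flipProb p D h ≤ 1 := by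
  by_cases hD : h ∈ D <;> simp [flipProb, hD, hp h]

theorem bern_symmDiff (S D : Finset (Fin m)) : bern p (S ∆ D) = bern (flipProb p D) S := by
  simp only [bern_eq_prod_piecewise]
  refine prod_congr rfl fun h _ => ?_
  by_cases hS : h ∈ S <;> by_cases hD : h ∈ D <;> simp [flipProb, mem_symmDiff, hS, hD]

theorem bernExp_eq_sum_flipProb (D : Finset (Fin m)) (f : Finset (Fin m) → ℝ) :
    bernExp p f = ∑ S, bern (flipProb p D) S * f (S ∆ D) := by
  simp only [← bern_symmDiff]
  calc bernExp p f = ∑ S, bern p S * f S := sum_congr rfl fun S _ => mul_comm _ _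
    _ = ∑ S, bern p (S ∆ D) * f (S ∆ D) :=
      (Equiv.sum_comp (symmDiff_left_involutive D).toPerm fun S => bern p S * f S).symm

end Bernoulli

section Aligned

variable {m : ℕ} {f : Finset (Fin m) → ℝ} {h : Fin m} {D : Finset (Fin m)}

theorem monotone_of_increasingAt (hf : ∀ h, IncreasingAt f h) : Monotone f :=
  monotone_iff_forall_le_insert.2 fun S h _ => hf h S

theorem IncreasingAt.comp_symmDiff (hf : IncreasingAt f h) (hD : h ∉ D) :
    IncreasingAt (fun S => f (S ∆ D)) h := by
  intro S
  have hflip : insert h S ∆ D = insert h (S ∆ D) := by grind [mem_symmDiff]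
  simpa only [hflip] using hf (S ∆ D)

theorem DecreasingAt.increasingAt_comp_symmDiff (hf : DecreasingAt f h) (hD : h ∈ D) :
    IncreasingAt (fun S => f (S ∆ D)) h := by
  intro S
  by_cases hS : h ∈ S
  · rw [insert_eq_of_mem hS]
  · have hflip : insert h (insert h S ∆ D) = S ∆ D := by grind [mem_symmDiff]
    simpa only [hflip] using hf (insert h S ∆ D)

theorem Aligned.exists_monotone_comp_symmDiff {n : ℕ} {F : Fin n → Finset (Fin m) → ℝ}
    (hF : Aligned F) : ∃ D : Finset (Fin m), ∀ l, Monotone fun S => F l (S ∆ D) := by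
  classical
  refine ⟨univ.filter fun h => ¬ ∀ l, IncreasingAt (F l) h,
    fun l => monotone_of_increasingAt fun h => ?_⟩
  by_cases hinc : ∀ l, IncreasingAt (F l) h
  · exact (hinc l).comp_symmDiff (by simpa using hinc)
  · exact ((hF h).resolve_left hinc l).increasingAt_comp_symmDiff (by simpa using hinc)

end Aligned

/-- For an aligned tuple of nonnegative functions, coarsening a partition of the index
set increases the product over blocks of the expectations of the block products. -/
theorem coarser_partition_blockProd_le {m n : ℕ}
    (p : Fin m → ℝ) (hp : ∀ h, 0 ≤ p h ∧ p h ≤ 1)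
    (F : Fin n → Finset (Fin m) → ℝ)
    (hFnonneg : ∀ l S, 0 ≤ F l S) (hFaligned : Aligned F)
    (ρ ρ' : Finpartition (univ : Finset (Fin n)))
    (hcoarser : ∀ M' ∈ ρ'.parts, ∃ M ∈ ρ.parts, M' ⊆ M) :
    ∏ M' ∈ ρ'.parts, bernExp p (fun S => ∏ l ∈ M', F l S) ≤
      ∏ M ∈ ρ.parts, bernExp p (fun S => ∏ l ∈ M, F l S) := by
  obtain ⟨D, hD⟩ := hFaligned.exists_monotone_comp_symmDiff
  simp only [bernExp_eq_sum_flipProb p D]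
  exact fkg_finpartition (bern_nonneg (flipProb_nonneg_and_le_one hp D)) (sum_bern _)
    (fun S T => (bern_mul_bern _ S T).le) (fun l _ S => hFnonneg l (S ∆ D)) (fun l _ => hD l)
    fun M' hM' => hcoarser M' hM'
end
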